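/- Let 2 ≤ k ≤ t ≤ n and let G be a k-graph on n vertices with minimum codegree δ(G) > f_k(t)·n. Then K_t(G) is tight-connected: for any two edges e, f of K_t(G) there is a finite sequence e = e_0, e_1, …, e_m = f of edges of K_t(G) such that |e_i ∩ e_{i+1}| ≥ t−1 for every 0 ≤ i < m. -/

import Mathlib

/-- `X` is an edge of the clique `j`-graph `K_j(G)` of the `k`-graph with edge set `E`:
`X` has `j` vertices and every `k`-element subset of `X` is an edge. -/
def cliqueEdge {V : Type*} [DecidableEq V] (E : Finset (Finset V)) (k j : ℕ)
    (X : Finset V) : Prop :=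
  X.card = j ∧ ∀ S ⊆ X, S.card = k → S ∈ E

/-! Show by induction on `j ≤ t` that `K_j(G)` is tight-connected. Given edges `X`, `Y` of
`K_{j+1}(G)`, join a `j`-subset of `X` to a `j`-subset of `Y` by a tight walk `A₀, A₁, …, A_m` in
`K_j(G)`.
If each consecutive pair `A_i`, `A_{i+1}` has a common extension `v_i`, meaning that `A_i ∪ {v_i}`
and `A_{i+1} ∪ {v_i}` are edges of `K_{j+1}(G)`, then
`X, A₀ ∪ {v₀}, A₁ ∪ {v₀}, A₁ ∪ {v₁}, A₂ ∪ {v₁}, …, Y` is a tight walk in `K_{j+1}(G)`.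
A vertex `v` is a common extension as soon as `D ∪ {v}` is an edge of `G` for each of the
`binom(j, k-1) + binom(j-1, k-2)` sets `D` of size `k - 1` contained in `A_i` or in `A_{i+1}`.
Each `D` rules out fewer than `(1 - f_k(t)) n` vertices, and `f_k(t)` is chosen so that these
cannot exhaust the vertex set. -/

section

open Finset

/-- The codegree threshold `f_k(t)`. The denominator is the number of `(k-1)`-sets contained in one
of two given `(t-1)`-sets that share `t - 2` elements. -/
noncomputable def codegreeThreshold (k t : ℕ) : ℝ :=
  1 - 1 / (((t - 1).choose (k - 1) : ℝ) + ((t - 2).choose (k - 2) : ℝ))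

variable {V : Type*} [DecidableEq V] {E : Finset (Finset V)} {k j t : ℕ} {A B X : Finset V} {v : V}

/-- The graph whose walks are the tight walks of the clique graph `K_j(G)`: its vertices are the
edges of `K_j(G)`, and two of them are adjacent when they differ in exactly one element. -/
def tightGraph (E : Finset (Finset V)) (k j : ℕ) :
    SimpleGraph {X : Finset V // cliqueEdge E k j X} where
  Adj X Y := #(X.1 ∩ Y.1) + 1 = j
  symm := ⟨fun X Y h => by rwa [inter_comm]⟩
  loopless := ⟨fun X h => by simp [X.2.1] at h⟩

theorem exists_forall_mem_of_lt_card {ι V : Type*} [Fintype V] {s : Finset ι} (hs : s.Nonempty)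
    {N : ι → Finset V} {M : ℝ} (hsM : #s ≤ M)
    (hN : ∀ i ∈ s, (1 - 1 / M) * Fintype.card V < #(N i)) : ∃ v, ∀ i ∈ s, v ∈ N i := by
  classical
  by_contra! hcon
  have hM : 0 < M := lt_of_lt_of_le (by exact_mod_cast hs.card_pos) hsM
  have hcover : (univ : Finset V) ⊆ s.biUnion fun i => (N i)ᶜ := fun v _ => by
    simpa using hcon v
  have hcompl : ∀ i ∈ s, (#(N i)ᶜ : ℝ) < Fintype.card V / M := fun i hi => by
    have hsum : (#(N i) + #(N i)ᶜ : ℝ) = Fintype.card V := by exact_mod_cast card_add_card_compl _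
    have := hN i hi
    rw [sub_mul, one_mul, one_div_mul_eq_div] at this
    linarith
  have : (Fintype.card V : ℝ) < Fintype.card V := calc
    (Fintype.card V : ℝ) ≤ ∑ i ∈ s, (#(N i)ᶜ : ℝ) := by
      exact_mod_cast (card_le_card hcover).trans card_biUnion_le
    _ < ∑ _i ∈ s, Fintype.card V / M := sum_lt_sum_of_nonempty hs hcompl
    _ = #s * (Fintype.card V / M) := by rw [sum_const, nsmul_eq_mul]
    _ ≤ M * (Fintype.card V / M) := by gcongr
    _ = Fintype.card V := mul_div_cancel₀ _ hM.ne'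
  exact this.false

theorem card_filter_insert_mem [Fintype V] {D : Finset V} (hE : ∀ e ∈ E, #e = #D + 1) :
    #{v | insert v D ∈ E} = #{e ∈ E | D ⊆ e} := by
  have notMem {v : V} (hv : insert v D ∈ E) : v ∉ D := fun hvD => by
    simpa [insert_eq_of_mem hvD] using hE _ hv
  refine card_bij (fun v _ => insert v D) ?_ ?_ ?_
  · intro v hv
    simpa using hv
  · intro v hv w _ hvw
    exact (insert_inj (notMem (mem_filter.mp hv).2)).mp hvw
  · intro e he
    obtain ⟨heE, hDe⟩ := mem_filter.mp he
    obtain ⟨v, -, rfl⟩ := exists_eq_insert_iff.mpr ⟨hDe, (hE e heE).symm⟩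
    exact ⟨v, by simpa using heE, rfl⟩

theorem card_powersetCard_union_powersetCard {r : ℕ} (hA : #A = j + 1) (hB : #B = j + 1)
    (hAB : #(A ∩ B) = j) :
    #(A.powersetCard (r + 1) ∪ B.powersetCard (r + 1)) = (j + 1).choose (r + 1) + j.choose r := by
  have hinter : A.powersetCard (r + 1) ∩ B.powersetCard (r + 1) = (A ∩ B).powersetCard (r + 1) := by
    ext S
    simp only [mem_inter, mem_powersetCard, subset_inter_iff]
    tauto
  rw [card_union, hinter, card_powersetCard, card_powersetCard, card_powersetCard, hA, hB, hAB,
    Nat.choose_succ_succ' j r]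
  omega

theorem exists_forall_insert_mem [Fintype V] (hk : 1 ≤ k) (hE : ∀ e ∈ E, #e = k)
    (hdeg : ∀ D : Finset V, #D = k - 1 →
      codegreeThreshold k t * Fintype.card V < #{e ∈ E | D ⊆ e})
    {F : Finset (Finset V)} (hF : F.Nonempty) (hFk : ∀ D ∈ F, #D = k - 1)
    (hFcard : #F ≤ (t - 1).choose (k - 1) + (t - 2).choose (k - 2)) :
    ∃ v, ∀ D ∈ F, insert v D ∈ E := by
  obtain ⟨v, hv⟩ := exists_forall_mem_of_lt_card hF (N := fun D => {v | insert v D ∈ E})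
    (M := (t - 1).choose (k - 1) + (t - 2).choose (k - 2)) (by exact_mod_cast hFcard)
    fun D hD => by
      rw [card_filter_insert_mem fun e he => by rw [hE e he, hFk D hD]; omega]
      exact hdeg D (hFk D hD)
  exact ⟨v, fun D hD => by simpa using hv D hD⟩

namespace cliqueEdge

theorem exists_subset (hX : cliqueEdge E k (j + 1) X) : ∃ A ⊆ X, cliqueEdge E k j A := by
  obtain ⟨A, hAX, hA⟩ := exists_subset_card_eq (j.le_succ.trans_eq hX.1.symm)
  exact ⟨A, hAX, hA, fun S hS => hX.2 S (hS.trans hAX)⟩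

theorem insert (hA : cliqueEdge E k j A) (hv : v ∉ A)
    (hvA : ∀ D ∈ A.powersetCard (k - 1), insert v D ∈ E) :
    cliqueEdge E k (j + 1) (insert v A) := by
  refine ⟨by rw [card_insert_of_notMem hv, hA.1], fun S hS hSk => ?_⟩
  by_cases hvS : v ∈ S
  · rw [← insert_erase hvS]
    exact hvA _ (mem_powersetCard.mpr
      ⟨subset_insert_iff.mp hS, by rw [card_erase_of_mem hvS, hSk]⟩)
  · exact hA.2 S ((subset_insert_iff_of_notMem hvS).mp hS) hSk

end cliqueEdge

theorem notMem_of_forall_insert_mem (hk : 2 ≤ k) (hE : ∀ e ∈ E, #e = k) (hA : k - 1 ≤ #A)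
    (hvA : ∀ D ∈ A.powersetCard (k - 1), insert v D ∈ E) : v ∉ A := by
  intro hv
  obtain ⟨D, hvD, hDA, hD⟩ := exists_subsuperset_card_eq (singleton_subset_iff.mpr hv)
    (by rw [card_singleton]; omega) hA
  have hDk := hE _ (hvA D (mem_powersetCard.mpr ⟨hDA, hD⟩))
  rw [insert_eq_of_mem (singleton_subset_iff.mp hvD)] at hDk
  omega

theorem exists_common_extension_of_le [Fintype V] (hk : 2 ≤ k) (hE : ∀ e ∈ E, #e = k)
    (hdeg : ∀ D : Finset V, #D = k - 1 →
      codegreeThreshold k t * Fintype.card V < #{e ∈ E | D ⊆ e})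
    (hkj : k - 1 ≤ j) (hjt : j < t) (hA : #A = j) (hB : #B = j) (hAB : #(A ∩ B) + 1 = j) :
    ∃ v, v ∉ A ∧ v ∉ B ∧ (∀ D ∈ A.powersetCard (k - 1), insert v D ∈ E) ∧
      ∀ D ∈ B.powersetCard (k - 1), insert v D ∈ E := by
  obtain ⟨r, rfl⟩ : ∃ r, k = r + 2 := ⟨k - 2, by omega⟩
  obtain ⟨i, rfl⟩ : ∃ i, j = i + 1 := ⟨#(A ∩ B), hAB.symm⟩
  have hcard : #(A.powersetCard (r + 1) ∪ B.powersetCard (r + 1)) ≤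
      (t - 1).choose (r + 1) + (t - 2).choose r := by
    rw [card_powersetCard_union_powersetCard hA hB (by omega)]
    gcongr <;> omega
  have hne : (A.powersetCard (r + 1) ∪ B.powersetCard (r + 1)).Nonempty :=
    (powersetCard_nonempty.mpr (by omega)).inl
  obtain ⟨v, hv⟩ := exists_forall_insert_mem (by omega) hE hdeg hne
    (fun D hD => (mem_union.mp hD).elim
      (fun h => (mem_powersetCard.mp h).2) fun h => (mem_powersetCard.mp h).2) hcard
  have hvA : ∀ D ∈ A.powersetCard (r + 1), insert v D ∈ E := fun D hD => hv D (mem_union_left _ hD)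
  have hvB : ∀ D ∈ B.powersetCard (r + 1), insert v D ∈ E := fun D hD => hv D (mem_union_right _ hD)
  exact ⟨v, notMem_of_forall_insert_mem hk hE (hA ▸ hkj) hvA,
    notMem_of_forall_insert_mem hk hE (hB ▸ hkj) hvB, hvA, hvB⟩

theorem exists_common_extension_of_lt [Fintype V] (hkV : k ≤ Fintype.card V) (hjk : j < k - 1)
    (hA : #A = j) (hB : #B = j) (hAB : #(A ∩ B) + 1 = j) :
    ∃ v, v ∉ A ∧ v ∉ B ∧ (∀ D ∈ A.powersetCard (k - 1), insert v D ∈ E) ∧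
      ∀ D ∈ B.powersetCard (k - 1), insert v D ∈ E := by
  have hlt : #(A ∪ B) < #(univ : Finset V) := by
    rw [card_union, card_univ]
    omega
  obtain ⟨v, -, hv⟩ := exists_mem_notMem_of_card_lt_card hlt
  rw [mem_union, not_or] at hv
  rw [powersetCard_eq_empty.mpr (hA ▸ hjk), powersetCard_eq_empty.mpr (hB ▸ hjk)]
  exact ⟨v, hv.1, hv.2, by simp, by simp⟩

theorem exists_insert_cliqueEdge_of_adj [Fintype V] (hk : 2 ≤ k) (hkV : k ≤ Fintype.card V)
    (hE : ∀ e ∈ E, #e = k)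
    (hdeg : ∀ D : Finset V, #D = k - 1 →
      codegreeThreshold k t * Fintype.card V < #{e ∈ E | D ⊆ e})
    (hjt : j < t) {A B : {X : Finset V // cliqueEdge E k j X}} (hAB : (tightGraph E k j).Adj A B) :
    ∃ v, cliqueEdge E k (j + 1) (insert v A.1) ∧ cliqueEdge E k (j + 1) (insert v B.1) := by
  obtain ⟨v, hvA, hvB, hA, hB⟩ := (lt_or_ge j (k - 1)).elim
    (fun hjk => exists_common_extension_of_lt hkV hjk A.2.1 B.2.1 hAB)
    (fun hkj => exists_common_extension_of_le hk hE hdeg hkj hjt A.2.1 B.2.1 hAB)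
  exact ⟨v, A.2.insert hvA hA, B.2.insert hvB hB⟩

namespace tightGraph

theorem reachable_of_subset {X Y : {X : Finset V // cliqueEdge E k (j + 1) X}} (hA : #A = j)
    (hAX : A ⊆ X.1) (hAY : A ⊆ Y.1) : (tightGraph E k (j + 1)).Reachable X Y := by
  have hle : j ≤ #(X.1 ∩ Y.1) := hA.symm.trans_le (card_le_card (subset_inter hAX hAY))
  obtain heq | hlt := hle.eq_or_lt
  · exact SimpleGraph.Adj.reachable (show #(X.1 ∩ Y.1) + 1 = j + 1 by omega)
  · have hX : X.1 ∩ Y.1 = X.1 := eq_of_subset_of_card_le inter_subset_left (X.2.1.trans_le hlt)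
    have hY : X.1 ∩ Y.1 = Y.1 := eq_of_subset_of_card_le inter_subset_right (Y.2.1.trans_le hlt)
    obtain rfl : X = Y := Subtype.ext (hX.symm.trans hY)
    exact .rfl

theorem adj_insert {A B : {X : Finset V // cliqueEdge E k j X}} (hAB : (tightGraph E k j).Adj A B)
    (hA : cliqueEdge E k (j + 1) (insert v A.1)) (hB : cliqueEdge E k (j + 1) (insert v B.1)) :
    (tightGraph E k (j + 1)).Adj ⟨_, hA⟩ ⟨_, hB⟩ := by
  have hvA : v ∉ A.1 := fun h => by simpa [insert_eq_of_mem h, A.2.1] using hA.1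
  change #(insert v A.1 ∩ insert v B.1) + 1 = j + 1
  rw [← insert_inter_distrib, card_insert_of_notMem fun h => hvA (mem_inter.mp h).1]
  exact congrArg (· + 1) hAB

theorem preconnected_succ (hconn : (tightGraph E k j).Preconnected)
    (hext : ∀ A B, (tightGraph E k j).Adj A B →
      ∃ v, cliqueEdge E k (j + 1) (insert v A.1) ∧ cliqueEdge E k (j + 1) (insert v B.1)) :
    (tightGraph E k (j + 1)).Preconnected := by
  have lift {A B} (p : (tightGraph E k j).Walk A B) :
      ∀ X Y : {X : Finset V // cliqueEdge E k (j + 1) X}, A.1 ⊆ X.1 → B.1 ⊆ Y.1 →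
        (tightGraph E k (j + 1)).Reachable X Y := by
    induction p with
    | @nil A => exact fun X Y hAX hAY => reachable_of_subset A.2.1 hAX hAY
    | @cons A C B hAC _ ih =>
      intro X Y hAX hBY
      obtain ⟨v, hvA, hvC⟩ := hext A C hAC
      exact (reachable_of_subset A.2.1 hAX (subset_insert v A.1)).trans
        ((adj_insert hAC hvA hvC).reachable.trans (ih ⟨_, hvC⟩ Y (subset_insert v C.1) hBY))
  intro X Y
  obtain ⟨A, hAX, hA⟩ := X.2.exists_subset
  obtain ⟨B, hBY, hB⟩ := Y.2.exists_subset
  obtain ⟨p⟩ := hconn ⟨A, hA⟩ ⟨B, hB⟩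
  exact lift p X Y hAX hBY

theorem preconnected_of_codegreeThreshold_lt [Fintype V] (hk : 2 ≤ k) (hkV : k ≤ Fintype.card V)
    (hE : ∀ e ∈ E, #e = k)
    (hdeg : ∀ D : Finset V, #D = k - 1 →
      codegreeThreshold k t * Fintype.card V < #{e ∈ E | D ⊆ e}) (hjt : j ≤ t) :
    (tightGraph E k j).Preconnected := by
  induction j with
  | zero =>
    intro X Y
    rw [Subtype.ext ((card_eq_zero.mp X.2.1).trans (card_eq_zero.mp Y.2.1).symm)]
  | succ j ih =>
    exact preconnected_succ (ih (by omega)) fun A B hAB =>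
      exists_insert_cliqueEdge_of_adj hk hkV hE hdeg hjt hAB

end tightGraph

end

/-- Let `2 ≤ k ≤ t ≤ n` and let `G` be a `k`-graph on `n` vertices with
minimum codegree `δ(G) > f_k(t)·n`. Then `K_t(G)` is tight-connected: for any two edges
`e, f` of `K_t(G)` there is a finite sequence `e = w 0, w 1, …, w m = f` of edges of `K_t(G)`
such that `|w i ∩ w (i+1)| ≥ t−1` for every `0 ≤ i < m`. -/
theorem stmt_7 {V : Type*} [Fintype V] [DecidableEq V] (n k t : ℕ)
    (hk : 2 ≤ k) (hkt : k ≤ t) (htn : t ≤ n) (hn : Fintype.card V = n)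
    (E : Finset (Finset V)) (hE : ∀ e ∈ E, e.card = k)
    (hdeg : ∀ D : Finset V, D.card = k - 1 →
      (1 - 1 / (((t-1).choose (k-1) : ℝ) + ((t-2).choose (k-2) : ℝ))) * n
        < ((E.filter (fun e => D ⊆ e)).card : ℝ)) :
    ∀ e f : Finset V, cliqueEdge E k t e → cliqueEdge E k t f →
      ∃ (m : ℕ) (w : ℕ → Finset V), w 0 = e ∧ w m = f ∧
        (∀ i ≤ m, cliqueEdge E k t (w i)) ∧
        (∀ i < m, t - 1 ≤ ((w i) ∩ (w (i+1))).card) := by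
  intro e f he hf
  subst hn
  obtain ⟨p⟩ := tightGraph.preconnected_of_codegreeThreshold_lt hk (hkt.trans htn) hE hdeg le_rfl
    ⟨e, he⟩ ⟨f, hf⟩
  refine ⟨p.length, fun i => (p.getVert i).1, congrArg Subtype.val p.getVert_zero,
    congrArg Subtype.val p.getVert_length, fun i _ => (p.getVert i).2, fun i hi => ?_⟩
  exact (Nat.eq_sub_of_add_eq (p.adj_getVert_succ hi)).ge
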